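/- Let (T,w) be an instance of the tree search problem and let D* be an optimal search tree for it. Fix a real number 0 ≤ α < 1 and an integer c > 3(Δ(T) + 1)/α, where Δ(T) is the maximum degree of T. Then for every node v* of D* with d(r(D*), v*) ≥ c, the total weight w(D*_{v*}) of the leaves in the subtree of D* rooted at v* satisfies w(D*_{v*}) ≤ α·w(D*), where w(D*) = w(T). -/

import Mathlib

/-!
Let `p` be a subtree of the optimal tree `D` at depth `d`, with weight `W'`, and let `W = w(T)`. The
bound proved is `d * W' ≤ 2 (Δ + 1) W`, by an exchange argument.

Choose a centroid `v` of `T` for the weight carried by the leaves of `p`: a node with minimal subtree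
among those whose subtree carries at least half of that weight (`exists_centroid`). Build a new
search tree that queries `v` and all its children, and then continues in each resulting piece (the
complement of `T_v`, the subtree of each child, and `{v}`) with the restriction of `D` to that piece
(`BT.restrict`, `chain`). At most `Δ + 1` queries are prepended, which adds at most `(Δ + 1) W` to
the cost.

On the other hand, restricting `D` to a piece deletes every query whose label lies outside the piece,
since such a query separates no two nodes of the piece (`BT.cost_restrict_path`). Each of the `d`
queries above `p` survives in at most one piece, and no query survives in `{v}`. All pieces other
than `{v}` carry at most half of the weight of `p`, so restriction saves at least `d * W' / 2`.
Optimality of `D` gives the bound.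
-/

open scoped Classical

/-- Ordered binary trees, every node carrying a label (assignment). `nil` is the empty tree. -/
inductive BT (α : Type) where
  | nil : BT α
  | node (a : α) (l r : BT α) : BT α
  deriving DecidableEq

namespace BT

variable {α : Type}

/-- Labels of the leaves (nodes with no children), from left to right. -/
def leafList : BT α → List α
  | .nil => []
  | .node a .nil .nil => [a]
  | .node _ l r => l.leafList ++ r.leafList

/-- Labels of all nodes. -/
def vals : BT α → List α
  | .nil => []
  | .node a l r => a :: (l.vals ++ r.vals)

/-- Leaf labels together with the depth (number of edges from the root) of the leaf. -/
def leafDepths : BT α → List (α × ℕ)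
  | .nil => []
  | .node a .nil .nil => [(a, 0)]
  | .node _ l r => (l.leafDepths ++ r.leafDepths).map (fun p => (p.1, p.2 + 1))

/-- Height of a binary tree, in edges. -/
def height : BT α → ℕ
  | .nil => 0
  | .node _ .nil .nil => 0
  | .node _ l r => max l.height r.height + 1

/-- Label of the root. -/
def rootVal : BT α → Option α
  | .nil => none
  | .node a _ _ => some a

/-- The labels of the nodes on the path from the root to the (leftmost) leaf labelled `x`. -/
def pathTo [DecidableEq α] : BT α → α → List α
  | .nil, _ => []
  | .node a l r, x => a :: (if x ∈ r.leafList then r.pathTo x else l.pathTo x)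

/-- The depth (number of edges) of the leaf labelled `x`. -/
def depthOf [DecidableEq α] (D : BT α) (x : α) : ℕ := (D.pathTo x).length - 1

/-- The search-tree property w.r.t. a descendance relation `desc` (`desc u v` meaning
`v` lies in the subtree of the input tree rooted at `u`): everything in the right subtree
of a node labelled `a` is in the subtree of `a`, everything in the left subtree is not. -/
def SearchProp (desc : α → α → Prop) : BT α → Prop
  | .nil => True
  | .node a l r =>
      (∀ b ∈ r.vals, desc a b) ∧ (∀ b ∈ l.vals, ¬ desc a b) ∧
        SearchProp desc l ∧ SearchProp desc r

/-- Cost (expected number of queries, unnormalized) of a search tree. -/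
def cost (w : α → ℕ) (D : BT α) : ℕ := (D.leafDepths.map (fun p => p.2 * w p.1)).sum

/-- Total weight of the leaves of a search (sub)tree. -/
def leafWeight (w : α → ℕ) (D : BT α) : ℕ := (D.leafList.map w).sum

/-- All subtrees of a binary tree together with their depth. -/
def subtreesD : BT α → List (BT α × ℕ)
  | .nil => []
  | .node a l r =>
      (BT.node a l r, 0) :: (l.subtreesD ++ r.subtreesD).map (fun p => (p.1, p.2 + 1))

end BT

/-- A finite rooted tree, encoded by a parent function on `Fin n`. -/
structure RTree where
  n : ℕ
  parent : Fin n → Fin n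
  root : Fin n
  parent_root : parent root = root
  reach : ∀ v, ∃ k, parent^[k] v = root

namespace RTree

variable (T : RTree)

/-- `T.anc u v` holds iff `u` is a (weak) ancestor of `v`, i.e. `v ∈ T_u`. -/
def anc (u v : Fin T.n) : Prop := ∃ k, T.parent^[k] v = u

/-- The set of nodes of the subtree `T_u` rooted at `u`. -/
noncomputable def subtree (u : Fin T.n) : Finset (Fin T.n) :=
  Finset.univ.filter (fun v => T.anc u v)

/-- Total weight of a set of nodes. -/
def wsum (w : Fin T.n → ℕ) (S : Finset (Fin T.n)) : ℕ := ∑ v ∈ S, w v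

/-- `D` is a search tree for the entire tree `T`. -/
def IsSearchTree (D : BT (Fin T.n)) : Prop :=
  (∀ v : Fin T.n, D.leafList.count v = 1) ∧ BT.SearchProp T.anc D

/-- `D` is a search tree for the subtree (or subforest) of `T` induced by the node set `V'`. -/
def IsSearchTreeOn (V' : Finset (Fin T.n)) (D : BT (Fin T.n)) : Prop :=
  (∀ v : Fin T.n, D.leafList.count v = (if v ∈ V' then 1 else 0)) ∧
    (∀ a ∈ D.vals, a ∈ V') ∧ BT.SearchProp T.anc D

/-- `D` is an optimal (minimum expected cost) search tree for `(T,w)`. -/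
def IsOptimal (w : Fin T.n → ℕ) (D : BT (Fin T.n)) : Prop :=
  T.IsSearchTree D ∧ ∀ D' : BT (Fin T.n), T.IsSearchTree D' → BT.cost w D ≤ BT.cost w D'

/-- Degree of a node of `T` (number of neighbours). -/
noncomputable def degree (v : Fin T.n) : ℕ :=
  (Finset.univ.filter (fun u => T.parent u = v ∧ u ≠ v)).card + (if v = T.root then 0 else 1)

/-- Maximum degree `Δ(T)`. -/
noncomputable def maxDegree : ℕ := Finset.univ.sup T.degree

/-- `y` lies on the (unique) path between `u` and `v` in `T`. -/
def onPath (y u v : Fin T.n) : Prop :=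
  (T.anc y u ∨ T.anc y v) ∧ (∀ z, T.anc z u → T.anc z v → T.anc z y)

end RTree


/-! ### Induction and cost recursion for binary trees -/

namespace BT

variable {α : Type}

/-- Induction on binary trees with leaves separated from the other nodes. -/
theorem leafInd {P : BT α → Prop} (h0 : P .nil) (h1 : ∀ a, P (.node a .nil .nil))
    (h2 : ∀ a l r, (l ≠ .nil ∨ r ≠ .nil) → P l → P r → P (.node a l r)) : ∀ D, P D := by
  intro D
  induction D with
  | nil => exact h0
  | node a l r ihl ihr =>
    by_cases h : l ≠ .nil ∨ r ≠ .nil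
    · exact h2 a l r h ihl ihr
    · push Not at h
      rw [h.1, h.2]
      exact h1 a

theorem leafList_node (a : α) {l r : BT α} (h : l ≠ .nil ∨ r ≠ .nil) :
    (node a l r).leafList = l.leafList ++ r.leafList := by
  cases l <;> cases r <;> simp_all [leafList]

theorem leafDepths_node (a : α) {l r : BT α} (h : l ≠ .nil ∨ r ≠ .nil) :
    (node a l r).leafDepths =
      (l.leafDepths ++ r.leafDepths).map (fun p => (p.1, p.2 + 1)) := by
  cases l <;> cases r <;> simp_all [leafDepths]

theorem leafDepths_fst (D : BT α) : D.leafDepths.map Prod.fst = D.leafList := by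
  induction D using leafInd with
  | h0 => rfl
  | h1 a => rfl
  | h2 a l r h ihl ihr =>
    rw [leafDepths_node a h, leafList_node a h, ← ihl, ← ihr]
    simp [Function.comp_def]

theorem leafWeight_node (w : α → ℕ) (a : α) {l r : BT α} (h : l ≠ .nil ∨ r ≠ .nil) :
    (node a l r).leafWeight w = l.leafWeight w + r.leafWeight w := by
  simp [leafWeight, leafList_node a h]

theorem cost_shift (w : α → ℕ) (L : List (α × ℕ)) :
    ((L.map (fun p => (p.1, p.2 + 1))).map (fun p => p.2 * w p.1)).sum =
      (L.map (fun p => p.2 * w p.1)).sum + ((L.map Prod.fst).map w).sum := by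
  induction L with
  | nil => rfl
  | cons x L ih =>
    simp only [List.map_cons, List.sum_cons, ih]
    ring

theorem cost_node (w : α → ℕ) (a : α) {l r : BT α} (h : l ≠ .nil ∨ r ≠ .nil) :
    (node a l r).cost w =
      l.cost w + r.cost w + l.leafWeight w + r.leafWeight w := by
  unfold cost leafWeight
  rw [leafDepths_node a h, cost_shift, List.map_append, List.map_append, leafDepths_fst,
    leafDepths_fst]
  simp only [List.map_append, List.sum_append]
  ring

theorem cost_node_le (w : α → ℕ) (a : α) (l r : BT α) :
    (node a l r).cost w ≤ l.cost w + r.cost w + l.leafWeight w + r.leafWeight w := by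
  by_cases h : l ≠ .nil ∨ r ≠ .nil
  · exact (cost_node w a h).le
  · push Not at h
    rw [h.1, h.2]
    simp [cost, leafDepths]

theorem sum_list_sum {β ι : Type} (s : Finset ι) (F : ι → β → ℕ) (L : List β) :
    (L.map (fun x => ∑ c ∈ s, F c x)).sum = ∑ c ∈ s, (L.map (F c)).sum := by
  induction L with
  | nil => simp
  | cons x L ih => simp [ih, Finset.sum_add_distrib]

theorem cost_sum {ι : Type} (s : Finset ι) (F : ι → α → ℕ) (D : BT α) :
    D.cost (fun x => ∑ c ∈ s, F c x) = ∑ c ∈ s, D.cost (F c) := by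
  unfold cost
  rw [← sum_list_sum]
  simp [Finset.mul_sum]

theorem cost_add (f g : α → ℕ) (D : BT α) :
    D.cost (fun x => f x + g x) = D.cost f + D.cost g := by
  unfold cost
  rw [← List.sum_map_add]
  simp [mul_add]

theorem leafWeight_sum {ι : Type} (s : Finset ι) (F : ι → α → ℕ) (D : BT α) :
    D.leafWeight (fun x => ∑ c ∈ s, F c x) = ∑ c ∈ s, D.leafWeight (F c) :=
  sum_list_sum s F _

theorem leafWeight_add (f g : α → ℕ) (D : BT α) :
    D.leafWeight (fun x => f x + g x) = D.leafWeight f + D.leafWeight g := by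
  unfold leafWeight
  rw [← List.sum_map_add]

theorem leafList_subset_vals (D : BT α) : ∀ x ∈ D.leafList, x ∈ D.vals := by
  induction D using leafInd with
  | h0 => simp [leafList]
  | h1 a => simp [leafList, vals]
  | h2 a l r h ihl ihr =>
    intro x hx
    rw [leafList_node a h, List.mem_append] at hx
    simp only [vals, List.mem_cons, List.mem_append]
    exact Or.inr (hx.imp (ihl x) (ihr x))

/-! ### Restriction of a search tree to a set of nodes -/

/-- The tree with root label `a` and subtrees `l`, `r`, with the root suppressed when one of the
subtrees is empty. -/
def join (a : α) : BT α → BT α → BT α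
  | .nil, r => r
  | .node b l1 l2, .nil => .node b l1 l2
  | .node b l1 l2, .node c r1 r2 => .node a (.node b l1 l2) (.node c r1 r2)

/-- The tree obtained from a search tree by deleting the leaves outside `V` and suppressing every
query with a side that contains no node of `V`. -/
noncomputable def restrict (V : α → Prop) : BT α → BT α
  | .nil => .nil
  | .node a .nil .nil => if V a then .node a .nil .nil else .nil
  | .node a l r => join a (restrict V l) (restrict V r)

/-- The indicator function of `V`, with values in `ℕ`. -/
noncomputable def ind (V : α → Prop) (x : α) : ℕ := if V x then 1 else 0

/-- The weight function `w` set to zero outside `V`. -/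
noncomputable def wOn (w : α → ℕ) (V : α → Prop) : α → ℕ := fun x => if V x then w x else 0

theorem wOn_eq (w : α → ℕ) (V : α → Prop) (x : α) : wOn w V x = ind V x * w x := by
  simp [wOn, ind]

theorem join_cases (a : α) (l r : BT α) :
    (l = .nil ∧ join a l r = r) ∨ (r = .nil ∧ join a l r = l) ∨
      (l ≠ .nil ∧ r ≠ .nil ∧ join a l r = node a l r) := by
  cases l <;> cases r <;> simp [join]

theorem leafList_join (a : α) (l r : BT α) :
    (join a l r).leafList = l.leafList ++ r.leafList := by
  rcases join_cases a l r with ⟨h, e⟩ | ⟨h, e⟩ | ⟨h, _, e⟩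
  · rw [e, h]; rfl
  · rw [e, h]; simp [leafList]
  · rw [e, leafList_node a (Or.inl h)]

theorem restrict_node (V : α → Prop) (a : α) {l r : BT α} (h : l ≠ .nil ∨ r ≠ .nil) :
    (node a l r).restrict V = join a (l.restrict V) (r.restrict V) := by
  cases l <;> cases r <;> simp_all [restrict]

theorem leafList_restrict (V : α → Prop) (D : BT α) :
    (D.restrict V).leafList = D.leafList.filter (fun x => decide (V x)) := by
  induction D using leafInd with
  | h0 => rfl
  | h1 a => by_cases h : V a <;> simp [restrict, leafList, h]
  | h2 a l r h ihl ihr =>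
    rw [restrict_node V a h, leafList_join, leafList_node a h, List.filter_append, ihl, ihr]

theorem leafWeight_restrict (w : α → ℕ) (V : α → Prop) (D : BT α) :
    (D.restrict V).leafWeight w = D.leafWeight (wOn w V) := by
  unfold leafWeight
  rw [leafList_restrict]
  induction D.leafList with
  | nil => rfl
  | cons x L ih => by_cases h : V x <;> simp [h, wOn] <;> simpa [wOn] using ih

theorem mem_leafList_restrict {V : α → Prop} {D : BT α} {x : α} :
    x ∈ (D.restrict V).leafList ↔ x ∈ D.leafList ∧ V x := by
  simp [leafList_restrict]

theorem exists_leaf {D : BT α} (h : D ≠ .nil) : ∃ x, x ∈ D.leafList := by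
  induction D using leafInd with
  | h0 => exact absurd rfl h
  | h1 a => exact ⟨a, by simp [leafList]⟩
  | h2 a l r hn ihl ihr =>
    rw [leafList_node a hn]
    rcases hn with hn | hn
    · obtain ⟨x, hx⟩ := ihl hn
      exact ⟨x, by simp [hx]⟩
    · obtain ⟨x, hx⟩ := ihr hn
      exact ⟨x, by simp [hx]⟩

theorem cost_join_le (w : α → ℕ) (a : α) (l r : BT α) :
    (join a l r).cost w ≤ l.cost w + r.cost w + l.leafWeight w + r.leafWeight w := by
  rcases join_cases a l r with ⟨h, e⟩ | ⟨h, e⟩ | ⟨h, _, e⟩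
  · rw [e]; omega
  · rw [e]; omega
  · rw [e]; exact cost_node_le w a l r

theorem cost_restrict_le (w : α → ℕ) (V : α → Prop) (D : BT α) :
    (D.restrict V).cost w ≤ D.cost (wOn w V) := by
  induction D using leafInd with
  | h0 => simp [restrict, cost, leafDepths]
  | h1 a => by_cases h : V a <;> simp [restrict, cost, leafDepths, h]
  | h2 a l r h ihl ihr =>
    rw [restrict_node V a h, cost_node _ a h]
    have := cost_join_le w a (l.restrict V) (r.restrict V)
    rw [leafWeight_restrict, leafWeight_restrict] at this
    omega

/-- `K` contains the label of every query that separates two nodes of `V`. -/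
def Keeps (desc : α → α → Prop) (V K : α → Prop) : Prop :=
  ∀ a b c, V b → V c → desc a b → ¬ desc a c → K a

/-- A query with label outside `K` separates no nodes of `V`, hence is suppressed. -/
theorem join_restrict_of_not {desc : α → α → Prop} {V K : α → Prop} (hK : Keeps desc V K)
    {a : α} {l r : BT α} (hs : SearchProp desc (node a l r)) :
    (l.restrict V = .nil ∨ r.restrict V = .nil) ∨ K a := by
  by_contra hcon
  push Not at hcon
  obtain ⟨⟨hl, hr⟩, hK'⟩ := hcon
  obtain ⟨x, hx⟩ := exists_leaf hl
  obtain ⟨y, hy⟩ := exists_leaf hr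
  rw [mem_leafList_restrict] at hx hy
  obtain ⟨h1, h2, _, _⟩ := hs
  exact hK' (hK a y x hy.2 hx.2 (h1 _ (leafList_subset_vals _ _ hy.1))
    (h2 _ (leafList_subset_vals _ _ hx.1)))

theorem vals_restrict_subset (V : α → Prop) (D : BT α) :
    ∀ x ∈ (D.restrict V).vals, x ∈ D.vals := by
  induction D using leafInd with
  | h0 => simp [restrict]
  | h1 a => by_cases h : V a <;> simp [restrict, vals, h]
  | h2 a l r h ihl ihr =>
    intro x hx
    rw [restrict_node V a h] at hx
    simp only [vals, List.mem_cons, List.mem_append]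
    rcases join_cases a (l.restrict V) (r.restrict V) with ⟨_, e⟩ | ⟨_, e⟩ | ⟨_, _, e⟩
    · rw [e] at hx; exact Or.inr (Or.inr (ihr x hx))
    · rw [e] at hx; exact Or.inr (Or.inl (ihl x hx))
    · rw [e] at hx
      simp only [vals, List.mem_cons, List.mem_append] at hx
      exact hx.imp_right (Or.imp (ihl x) (ihr x))

theorem searchProp_restrict {desc : α → α → Prop} (V : α → Prop) (D : BT α)
    (hs : SearchProp desc D) : SearchProp desc (D.restrict V) := by
  induction D using leafInd with
  | h0 => simp [restrict, SearchProp]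
  | h1 a => by_cases h : V a <;> simp [restrict, SearchProp, vals, h]
  | h2 a l r h ihl ihr =>
    obtain ⟨h1, h2, h3, h4⟩ := hs
    rw [restrict_node V a h]
    rcases join_cases a (l.restrict V) (r.restrict V) with ⟨_, e⟩ | ⟨_, e⟩ | ⟨_, _, e⟩
    · rw [e]; exact ihr h4
    · rw [e]; exact ihl h3
    · rw [e]
      exact ⟨fun b hb => h1 b (vals_restrict_subset V r b hb),
        fun b hb => h2 b (vals_restrict_subset V l b hb), ihl h3, ihr h4⟩

theorem vals_restrict {desc : α → α → Prop} {V K : α → Prop} (hK : Keeps desc V K) (D : BT α)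
    (hs : SearchProp desc D) : ∀ x ∈ (D.restrict V).vals, V x ∨ K x := by
  induction D using leafInd with
  | h0 => simp [restrict, vals]
  | h1 a =>
    by_cases h : V a <;> simp [restrict, vals, h]
  | h2 a l r h ihl ihr =>
    have hj := join_restrict_of_not hK hs
    obtain ⟨h1, h2, h3, h4⟩ := hs
    intro x hx
    rw [restrict_node V a h] at hx
    rcases join_cases a (l.restrict V) (r.restrict V) with ⟨_, e⟩ | ⟨_, e⟩ | ⟨hl, hr, e⟩
    · rw [e] at hx; exact ihr h4 x hx
    · rw [e] at hx; exact ihl h3 x hx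
    · rw [e] at hx
      simp only [vals, List.mem_cons, List.mem_append] at hx
      rcases hx with rfl | hx | hx
      · rcases hj with (hj | hj) | hj
        · exact absurd hj hl
        · exact absurd hj hr
        · exact Or.inr hj
      · exact ihl h3 x hx
      · exact ihr h4 x hx

/-- `Path D p L`: the nonempty tree `p` is a subtree of `D`, and `L` lists the labels of the nodes
strictly above it. -/
inductive Path : BT α → BT α → List α → Prop
  | here (a : α) (l r : BT α) : Path (.node a l r) (.node a l r) []
  | left (a : α) (l r p : BT α) (L : List α) : Path l p L → Path (.node a l r) p (a :: L)
  | right (a : α) (l r p : BT α) (L : List α) : Path r p L → Path (.node a l r) p (a :: L)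

theorem path_of_mem (D : BT α) :
    ∀ p ∈ D.subtreesD, ∃ L, Path D p.1 L ∧ L.length = p.2 := by
  induction D with
  | nil => simp [subtreesD]
  | node a l r ihl ihr =>
    intro p hp
    simp only [subtreesD, List.mem_cons, List.mem_map, List.mem_append] at hp
    rcases hp with rfl | ⟨q, hq | hq, rfl⟩
    · exact ⟨[], .here a l r, rfl⟩
    · obtain ⟨L, hL, hl⟩ := ihl q hq
      exact ⟨a :: L, .left _ _ _ _ _ hL, by simp [hl]⟩
    · obtain ⟨L, hL, hl⟩ := ihr q hq
      exact ⟨a :: L, .right _ _ _ _ _ hL, by simp [hl]⟩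

theorem Path.ne_nil {D p : BT α} {L : List α} (h : Path D p L) : D ≠ .nil := by
  cases h <;> simp

theorem Path.leafWeight_le {D p : BT α} {L : List α} (h : Path D p L) (w : α → ℕ) :
    p.leafWeight w ≤ D.leafWeight w := by
  induction h with
  | here a l r => exact le_rfl
  | left a l r p L h ih =>
    rw [leafWeight_node w a (Or.inl h.ne_nil)]; omega
  | right a l r p L h ih =>
    rw [leafWeight_node w a (Or.inr h.ne_nil)]; omega

/-- Number of entries of `L` satisfying `K`. -/
noncomputable def cnt (K : α → Prop) (L : List α) : ℕ := (L.map (ind K)).sum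

theorem cost_join_of_nil (w : α → ℕ) (a : α) (l r : BT α) (h : l = .nil ∨ r = .nil) :
    (join a l r).cost w = l.cost w + r.cost w := by
  rcases join_cases a l r with ⟨h', e⟩ | ⟨h', e⟩ | ⟨h1, h2, e⟩
  · rw [e, h']; simp [cost, leafDepths]
  · rw [e, h']; simp [cost, leafDepths]
  · rcases h with h | h
    · exact absurd h h1
    · exact absurd h h2

/-- The saving of a restriction: every leaf of `p` in `V` loses all the queries above `p` whose
label is not in `K`. -/
theorem cost_restrict_path {desc : α → α → Prop} {V K : α → Prop} (hK : Keeps desc V K)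
    (w : α → ℕ) {D p : BT α} {L : List α} (h : Path D p L) (hs : SearchProp desc D) :
    (D.restrict V).cost w + p.leafWeight (wOn w V) * L.length ≤
      D.cost (wOn w V) + p.leafWeight (wOn w V) * cnt K L := by
  induction h with
  | here a l r => simpa [cnt] using cost_restrict_le w V (node a l r)
  | left a l r p L h ih =>
    have hne : l ≠ .nil ∨ r ≠ .nil := Or.inl h.ne_nil
    have h2 := join_restrict_of_not hK hs
    have h3 := ih hs.2.2.1
    have h4 := cost_restrict_le w V r
    have h5 := h.leafWeight_le (wOn w V)
    have h6 := cost_join_le w a (l.restrict V) (r.restrict V)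
    rw [leafWeight_restrict, leafWeight_restrict] at h6
    rw [restrict_node V a hne, cost_node _ a hne]
    by_cases hk : K a
    · simp only [cnt, ind, List.map_cons, List.sum_cons, List.length_cons, hk, if_true] at h3 ⊢
      nlinarith
    · have h7 := cost_join_of_nil w a _ _ (h2.resolve_right hk)
      simp only [cnt, ind, List.map_cons, List.sum_cons, List.length_cons, hk, if_false] at h3 ⊢
      nlinarith
  | right a l r p L h ih =>
    have hne : l ≠ .nil ∨ r ≠ .nil := Or.inr h.ne_nil
    have h2 := join_restrict_of_not hK hs
    have h3 := ih hs.2.2.2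
    have h4 := cost_restrict_le w V l
    have h5 := h.leafWeight_le (wOn w V)
    have h6 := cost_join_le w a (l.restrict V) (r.restrict V)
    rw [leafWeight_restrict, leafWeight_restrict] at h6
    rw [restrict_node V a hne, cost_node _ a hne]
    by_cases hk : K a
    · simp only [cnt, ind, List.map_cons, List.sum_cons, List.length_cons, hk, if_true] at h3 ⊢
      nlinarith
    · have h7 := cost_join_of_nil w a _ _ (h2.resolve_right hk)
      simp only [cnt, ind, List.map_cons, List.sum_cons, List.length_cons, hk, if_false] at h3 ⊢
      nlinarith

end BT

/-! ### Ancestors and children in a rooted tree -/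

namespace RTree

variable (T : RTree)

theorem anc_refl (u : Fin T.n) : T.anc u u := ⟨0, rfl⟩

theorem anc_trans {a b c : Fin T.n} (h : T.anc a b) (h' : T.anc b c) : T.anc a c := by
  obtain ⟨j, rfl⟩ := h
  obtain ⟨k, rfl⟩ := h'
  exact ⟨j + k, Function.iterate_add_apply _ _ _ _⟩

theorem iterate_root (k : ℕ) : T.parent^[k] T.root = T.root :=
  Function.iterate_fixed T.parent_root k

theorem eq_root_of_cycle {v : Fin T.n} {k : ℕ} (hk : 0 < k) (h : T.parent^[k] v = v) :
    v = T.root := by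
  obtain ⟨m, hm⟩ := T.reach v
  -- `k * m ≥ m` steps from `v` lead both to `v` and to the root
  have h1 : T.parent^[k * m] v = v := by
    rw [Function.iterate_mul]
    exact Function.iterate_fixed h m
  have h2 : k * m = (k * m - m) + m := by
    have : m ≤ k * m := Nat.le_mul_of_pos_left m hk
    omega
  rw [h2, Function.iterate_add_apply, hm, iterate_root] at h1
  exact h1.symm

theorem anc_antisymm {u v : Fin T.n} (h : T.anc u v) (h' : T.anc v u) : u = v := by
  obtain ⟨j, rfl⟩ := h
  obtain ⟨k, hk⟩ := h'
  rcases Nat.eq_zero_or_pos j with rfl | hj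
  · rfl
  · rw [← Function.iterate_add_apply] at hk
    have := T.eq_root_of_cycle (by omega) hk
    rw [this, iterate_root]

theorem anc_total {a b x : Fin T.n} (h : T.anc a x) (h' : T.anc b x) :
    T.anc a b ∨ T.anc b a := by
  obtain ⟨j, rfl⟩ := h
  obtain ⟨k, rfl⟩ := h'
  rcases le_total j k with hjk | hjk
  · exact Or.inr ⟨k - j, by rw [← Function.iterate_add_apply]; congr 2; omega⟩
  · exact Or.inl ⟨j - k, by rw [← Function.iterate_add_apply]; congr 2; omega⟩

theorem anc_root (v : Fin T.n) : T.anc T.root v := T.reach v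

/-- The children of `v`. The inequality excludes the root, which is its own parent. -/
noncomputable def children (v : Fin T.n) : Finset (Fin T.n) :=
  Finset.univ.filter (fun u => T.parent u = v ∧ u ≠ v)

variable {T}

theorem mem_children {u v : Fin T.n} : u ∈ T.children v ↔ T.parent u = v ∧ u ≠ v := by
  simp [children]

theorem anc_of_child {c v : Fin T.n} (h : c ∈ T.children v) : T.anc v c :=
  ⟨1, (mem_children.1 h).1⟩

theorem not_anc_child {c v : Fin T.n} (h : c ∈ T.children v) : ¬ T.anc c v := fun h' =>
  (mem_children.1 h).2 (T.anc_antisymm h' (anc_of_child h))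

theorem child_eq_of_anc {c c' v : Fin T.n} (h : c ∈ T.children v) (h' : c' ∈ T.children v)
    (ha : T.anc c c') : c = c' := by
  obtain ⟨k, hk⟩ := ha
  rcases k with _ | k
  · exact hk.symm
  · rw [Function.iterate_succ_apply, (mem_children.1 h').1] at hk
    exact absurd ⟨k, hk⟩ (not_anc_child h)

theorem child_unique {c c' v x : Fin T.n} (h : c ∈ T.children v) (h' : c' ∈ T.children v)
    (hx : T.anc c x) (hx' : T.anc c' x) : c = c' := by
  rcases T.anc_total hx hx' with ha | ha
  · exact child_eq_of_anc h h' ha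
  · exact (child_eq_of_anc h' h ha).symm

theorem exists_child {v x : Fin T.n} (h : T.anc v x) (hne : x ≠ v) :
    ∃ c ∈ T.children v, T.anc c x := by
  have hk := Nat.find_spec h
  have hmin := fun m => Nat.find_min h (m := m)
  generalize Nat.find h = k at hk hmin
  rcases k with _ | k
  · exact absurd hk hne
  · refine ⟨T.parent^[k] x, mem_children.2 ⟨?_, hmin k (Nat.lt_succ_self k)⟩, k, rfl⟩
    rw [← Function.iterate_succ_apply' T.parent]
    exact hk

/-- The sets `{v}`, the complement of `T_v`, and `T_c` for the children `c` of `v` partition the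
nodes. -/
theorem partition (v x : Fin T.n) :
    BT.ind (fun y => y = v) x + BT.ind (fun y => ¬ T.anc v y) x +
      ∑ c ∈ T.children v, BT.ind (T.anc c) x = 1 := by
  simp only [BT.ind]
  by_cases hx : x = v
  · subst hx
    have : ∑ c ∈ T.children x, (if T.anc c x then 1 else 0) = 0 :=
      Finset.sum_eq_zero fun c hc => if_neg (not_anc_child hc)
    simp [this, T.anc_refl]
  · by_cases hv : T.anc v x
    · obtain ⟨c, hc, hcx⟩ := exists_child hv hx
      rw [Finset.sum_eq_single_of_mem c hc]
      · simp [hx, hv, hcx]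
      · intro b hb hbc
        exact if_neg fun hbx => hbc (child_unique hb hc hbx hcx)
    · have : ∑ c ∈ T.children v, (if T.anc c x then 1 else 0) = 0 :=
        Finset.sum_eq_zero fun c hc =>
          if_neg fun h => hv (T.anc_trans (anc_of_child hc) h)
      simp [this, hx, hv]

theorem wOn_partition (w : Fin T.n → ℕ) (v : Fin T.n) :
    (fun x => BT.wOn w (fun y => y = v) x + BT.wOn w (fun y => ¬ T.anc v y) x +
      ∑ c ∈ T.children v, BT.wOn w (T.anc c) x) = w := by
  funext x
  have h := congrArg (fun k => k * w x) (partition v x)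
  simpa only [add_mul, Finset.sum_mul, one_mul, BT.wOn_eq] using h

theorem keeps_self (v : Fin T.n) : BT.Keeps T.anc (fun y => y = v) (fun _ => False) := by
  rintro a b b' rfl rfl h h'
  exact h' h

theorem keeps_anc (c : Fin T.n) : BT.Keeps T.anc (T.anc c) (T.anc c) := by
  intro a b b' hb hb' h h'
  rcases T.anc_total hb h with ha | ha
  · exact ha
  · exact absurd (T.anc_trans ha hb') h'

theorem keeps_compl (v : Fin T.n) :
    BT.Keeps T.anc (fun y => ¬ T.anc v y) (fun y => ¬ T.anc v y) := by
  intro a b b' hb hb' h h' hv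
  exact hb (T.anc_trans hv h)

theorem cnt_le (v : Fin T.n) (L : List (Fin T.n)) :
    BT.cnt (fun y => ¬ T.anc v y) L + ∑ c ∈ T.children v, BT.cnt (T.anc c) L ≤ L.length := by
  induction L with
  | nil => simp [BT.cnt]
  | cons x L ih =>
    have h := partition v x
    simp only [BT.cnt, List.map_cons, List.sum_cons, List.length_cons,
      Finset.sum_add_distrib] at ih ⊢
    omega

/-! ### The centroid and the new search tree -/

/-- A centroid of `T` for the weight carried by the leaves of `p`: a node `v` such that the complement
of `T_v` and the subtrees of the children of `v` each carry at most half of that weight. -/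
theorem exists_centroid (w : Fin T.n → ℕ) (p : BT (Fin T.n)) :
    ∃ v, 2 * p.leafWeight (BT.wOn w (fun y => ¬ T.anc v y)) ≤ p.leafWeight w ∧
      ∀ c ∈ T.children v, 2 * p.leafWeight (BT.wOn w (T.anc c)) ≤ p.leafWeight w := by
  let s : Finset (Fin T.n) :=
    Finset.univ.filter fun u => p.leafWeight w ≤ 2 * p.leafWeight (BT.wOn w (T.anc u))
  have hroot : T.root ∈ s := by
    have : BT.wOn w (T.anc T.root) = w := by
      funext x
      simp [BT.wOn, T.anc_root x]
    simp only [s, Finset.mem_filter, Finset.mem_univ, true_and, this]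
    omega
  obtain ⟨v, hv, hmin⟩ := Finset.exists_min_image s (fun u => (T.subtree u).card) ⟨_, hroot⟩
  refine ⟨v, ?_, ?_⟩
  · have h1 : (fun x => BT.wOn w (fun y => ¬ T.anc v y) x + BT.wOn w (T.anc v) x) = w := by
      funext x
      by_cases h : T.anc v x <;> simp [BT.wOn, h]
    have h2 := BT.leafWeight_add (BT.wOn w (fun y => ¬ T.anc v y)) (BT.wOn w (T.anc v)) p
    rw [h1] at h2
    have h3 := (Finset.mem_filter.1 hv).2
    omega
  · intro c hc
    by_contra hcon
    have hcs : c ∈ s := by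
      simp only [s, Finset.mem_filter, Finset.mem_univ, true_and]
      omega
    have hlt : (T.subtree c).card < (T.subtree v).card := by
      apply Finset.card_lt_card
      rw [Finset.ssubset_iff_of_subset]
      · exact ⟨v, by simp [subtree, T.anc_refl], by simpa [subtree] using not_anc_child hc⟩
      · intro x hx
        simp only [subtree, Finset.mem_filter, Finset.mem_univ, true_and] at hx ⊢
        exact T.anc_trans (anc_of_child hc) hx
    exact absurd (hmin c hcs) (by omega)

/-- The search tree that queries the nodes of the list `cs` in order and continues with the
restriction of `D` to `T_c` as soon as a query `c` is answered positively, and with the restriction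
of `D` to `{v}` when all answers are negative. -/
noncomputable def chain (D : BT (Fin T.n)) (v : Fin T.n) : List (Fin T.n) → BT (Fin T.n)
  | [] => D.restrict (fun y => y = v)
  | c :: cs => .node c (chain D v cs) (D.restrict (T.anc c))

theorem restrict_ne_nil {V : Fin T.n → Prop} {D : BT (Fin T.n)} {x : Fin T.n}
    (hx : x ∈ D.leafList) (hV : V x) : D.restrict V ≠ .nil := by
  intro h
  have := BT.mem_leafList_restrict.2 ⟨hx, hV⟩
  rw [h] at this
  simp [BT.leafList] at this

theorem chain_ne_nil {D : BT (Fin T.n)} (hD : ∀ x, x ∈ D.leafList) (v : Fin T.n)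
    (cs : List (Fin T.n)) : chain D v cs ≠ .nil := by
  cases cs with
  | nil => exact restrict_ne_nil (hD v) rfl
  | cons c cs => simp [chain]

theorem chain_vals {D : BT (Fin T.n)} (hs : BT.SearchProp T.anc D) (v : Fin T.n)
    (cs : List (Fin T.n)) : ∀ b ∈ (chain D v cs).vals, b = v ∨ ∃ c ∈ cs, T.anc c b := by
  induction cs with
  | nil =>
    intro b hb
    rcases BT.vals_restrict (keeps_self v) D hs b hb with h | h
    · exact Or.inl h
    · exact h.elim
  | cons c cs ih =>
    intro b hb
    simp only [chain, BT.vals, List.mem_cons, List.mem_append] at hb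
    rcases hb with rfl | hb | hb
    · exact Or.inr ⟨b, by simp, T.anc_refl b⟩
    · rcases ih b hb with h | ⟨c', h, h'⟩
      · exact Or.inl h
      · exact Or.inr ⟨c', by simp [h], h'⟩
    · have := BT.vals_restrict (keeps_anc c) D hs b hb
      exact Or.inr ⟨c, by simp, by simpa using this⟩

theorem chain_searchProp {D : BT (Fin T.n)} (hs : BT.SearchProp T.anc D) (v : Fin T.n)
    (cs : List (Fin T.n)) (hcs : ∀ c ∈ cs, c ∈ T.children v) (hnd : cs.Nodup) :
    BT.SearchProp T.anc (chain D v cs) := by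
  induction cs with
  | nil => exact BT.searchProp_restrict _ D hs
  | cons c cs ih =>
    rw [List.nodup_cons] at hnd
    have hc := hcs c (by simp)
    have hcs' : ∀ c' ∈ cs, c' ∈ T.children v := fun c' h => hcs c' (by simp [h])
    refine ⟨?_, ?_, ih hcs' hnd.2, BT.searchProp_restrict _ D hs⟩
    · intro b hb
      simpa using BT.vals_restrict (keeps_anc c) D hs b hb
    · intro b hb hcb
      rcases chain_vals hs v cs b hb with rfl | ⟨c', h, h'⟩
      · exact not_anc_child hc hcb
      · exact hnd.1 (child_unique hc (hcs' c' h) hcb h' ▸ h)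

theorem count_restrict {D : BT (Fin T.n)} (hD : ∀ x, D.leafList.count x = 1)
    (V : Fin T.n → Prop) (x : Fin T.n) :
    (D.restrict V).leafList.count x = BT.ind V x := by
  rw [BT.leafList_restrict, BT.ind]
  split_ifs with h
  · rw [List.count_filter (by simpa using h), hD]
  · rw [List.count_eq_zero]
    simp [h]

theorem chain_count {D : BT (Fin T.n)} (hD : ∀ x, D.leafList.count x = 1) (v : Fin T.n)
    (cs : List (Fin T.n)) (x : Fin T.n) : (chain D v cs).leafList.count x =
      BT.ind (fun y => y = v) x + (cs.map (fun c => BT.ind (T.anc c) x)).sum := by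
  have hmem : ∀ x, x ∈ D.leafList := fun x => List.count_pos_iff.1 (by rw [hD]; omega)
  induction cs with
  | nil => simp [chain, count_restrict hD]
  | cons c cs ih =>
    rw [chain, BT.leafList_node _ (Or.inl (chain_ne_nil hmem v cs)), List.count_append, ih,
      count_restrict hD, List.map_cons, List.sum_cons]
    ring

theorem chain_cost {D : BT (Fin T.n)} (hmem : ∀ x, x ∈ D.leafList) (w : Fin T.n → ℕ)
    (v : Fin T.n) (cs : List (Fin T.n)) : (chain D v cs).cost w ≤
      (D.restrict (fun y => y = v)).cost w +
        (cs.map (fun c => (D.restrict (T.anc c)).cost w)).sum +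
        cs.length * (chain D v cs).leafWeight w := by
  induction cs with
  | nil => simp [chain]
  | cons c cs ih =>
    have h := Or.inl (b := D.restrict (T.anc c) ≠ .nil) (chain_ne_nil hmem v cs)
    rw [chain, BT.cost_node w c h, BT.leafWeight_node w c h, List.map_cons, List.sum_cons,
      List.length_cons]
    nlinarith [Nat.zero_le (cs.length * (D.restrict (T.anc c)).leafWeight w)]

theorem leafWeight_eq {D : BT (Fin T.n)} (hD : ∀ x, D.leafList.count x = 1) (w : Fin T.n → ℕ) :
    D.leafWeight w = T.wsum w Finset.univ := by
  unfold BT.leafWeight wsum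
  rw [Finset.sum_list_map_count]
  have : D.leafList.toFinset = Finset.univ := by
    ext x
    simp only [List.mem_toFinset, Finset.mem_univ, iff_true]
    exact List.count_pos_iff.1 (by rw [hD]; omega)
  rw [this]
  refine Finset.sum_congr rfl fun x _ => ?_
  have h := hD x
  convert one_smul ℕ (w x)

theorem card_children_le (v : Fin T.n) : (T.children v).card ≤ T.maxDegree :=
  (Nat.le_add_right _ _).trans (Finset.le_sup (f := T.degree) (Finset.mem_univ v))

/-- The quantitative form of the result: depth times weight of a subtree of an optimal search tree
is at most `2 (Δ + 1) w(T)`. -/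
theorem depth_mul_weight_le (w : Fin T.n → ℕ) {D p : BT (Fin T.n)} {L : List (Fin T.n)}
    (hopt : T.IsOptimal w D) (hp : BT.Path D p L) :
    L.length * p.leafWeight w ≤ 2 * (T.maxDegree + 1) * T.wsum w Finset.univ := by
  obtain ⟨⟨hcount, hs⟩, hmin⟩ := hopt
  have hmem : ∀ x, x ∈ D.leafList := fun x => List.count_pos_iff.1 (by rw [hcount]; omega)
  obtain ⟨v, hv0, hvc⟩ := exists_centroid w p
  set ch := T.children v with hch
  let C := chain D v ch.toList
  let R := D.restrict (fun y => ¬ T.anc v y)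
  have hCne : R ≠ .nil ∨ C ≠ .nil := Or.inr (chain_ne_nil hmem v _)
  have hmch : ∀ c ∈ ch.toList, c ∈ T.children v := fun c hc => Finset.mem_toList.1 hc
  have hnew : T.IsSearchTree (.node v R C) := by
    refine ⟨fun x => ?_, ?_, ?_, BT.searchProp_restrict _ D hs,
      chain_searchProp hs v _ hmch (Finset.nodup_toList _)⟩
    · rw [BT.leafList_node _ hCne, List.count_append, count_restrict hcount,
        chain_count hcount, Finset.sum_map_toList]
      have := partition v x
      rw [← hch] at this
      omega
    · intro b hb
      rcases chain_vals hs v _ b hb with rfl | ⟨c, hc, hcb⟩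
      · exact T.anc_refl b
      · exact T.anc_trans (anc_of_child (hmch c hc)) hcb
    · intro b hb
      simpa using BT.vals_restrict (keeps_compl v) D hs b hb
  have hopt := hmin _ hnew
  have hW := leafWeight_eq hnew.1 w
  rw [BT.leafWeight_node w v hCne] at hW
  rw [BT.cost_node w v hCne] at hopt
  have hCc := chain_cost hmem w v ch.toList
  rw [Finset.sum_map_toList, Finset.length_toList] at hCc
  change C.cost w ≤ _ + _ + _ * C.leafWeight w at hCc
  have hcard : ch.card ≤ T.maxDegree := card_children_le v
  -- savings in the individual pieces
  have e1 := BT.cost_restrict_path (keeps_self v) w hp hs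
  have e2 := BT.cost_restrict_path (keeps_compl v) w hp hs
  have e3 := Finset.sum_le_sum fun c (_ : c ∈ ch) =>
    BT.cost_restrict_path (keeps_anc c) w hp hs
  rw [Finset.sum_add_distrib, Finset.sum_add_distrib, ← Finset.sum_mul] at e3
  have z1 : BT.cnt (fun _ : Fin T.n => False) L = 0 := by 
    have : BT.ind (fun _ : Fin T.n => False) = fun _ => 0 := by funext x; simp [BT.ind]
    simp [BT.cnt, this]
  rw [z1, mul_zero, add_zero] at e1
  have hcost : D.cost (BT.wOn w (fun y => y = v)) + D.cost (BT.wOn w (fun y => ¬ T.anc v y)) +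
      ∑ c ∈ ch, D.cost (BT.wOn w (T.anc c)) = D.cost w := by
    rw [← BT.cost_sum, ← BT.cost_add, ← BT.cost_add, hch, wOn_partition]
  have hwt : p.leafWeight (BT.wOn w (fun y => y = v)) +
      p.leafWeight (BT.wOn w (fun y => ¬ T.anc v y)) +
      ∑ c ∈ ch, p.leafWeight (BT.wOn w (T.anc c)) = p.leafWeight w := by
    rw [← BT.leafWeight_sum, ← BT.leafWeight_add, ← BT.leafWeight_add, hch, wOn_partition]
  -- surviving queries, weighted by at most half of the weight of `p`
  have hcnt := cnt_le v L
  rw [← hch] at hcnt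
  have f2 := Nat.mul_le_mul_right (BT.cnt (fun y => ¬ T.anc v y) L) hv0
  have f3 : 2 * ∑ c ∈ ch, p.leafWeight (BT.wOn w (T.anc c)) * BT.cnt (T.anc c) L ≤
      p.leafWeight w * ∑ c ∈ ch, BT.cnt (T.anc c) L := by
    rw [Finset.mul_sum, Finset.mul_sum]
    refine Finset.sum_le_sum fun c hc => ?_
    rw [← mul_assoc]
    exact Nat.mul_le_mul_right _ (hvc c hc)
  have f4 := Nat.mul_le_mul_left (p.leafWeight w) hcnt
  have f5 := congrArg (fun k => k * L.length) hwt
  simp only [add_mul] at f5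
  have f6 : ch.card * C.leafWeight w ≤ T.maxDegree * T.wsum w Finset.univ :=
    Nat.mul_le_mul hcard (by omega)
  have hRc : R.cost w = (D.restrict (fun y => ¬ T.anc v y)).cost w := rfl
  nlinarith

end RTree

/-- Let `D*` be an optimal search tree for `(T,w)`.  Fix a real `0 ≤ α < 1` and an integer
`c > 3(Δ(T)+1)/α` (equivalently, `α·c > 3(Δ(T)+1)`).  Then for every node `v*` of `D*`
at depth at least `c`, the total weight of the leaves of the subtree of `D*` rooted at
`v*` is at most `α·w(T)`. -/
theorem statement4 (T : RTree) (w : Fin T.n → ℕ)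
    (Dstar : BT (Fin T.n)) (hopt : T.IsOptimal w Dstar)
    (a : ℝ) (c : ℕ) (ha0 : 0 ≤ a) (ha1 : a < 1)
    (hc : 3 * ((T.maxDegree : ℝ) + 1) < a * c) :
    ∀ p ∈ Dstar.subtreesD, c ≤ p.2 →
      (BT.leafWeight w p.1 : ℝ) ≤ a * (T.wsum w Finset.univ : ℝ) := by
  intro p hp hcp
  obtain ⟨L, hL, hlen⟩ := BT.path_of_mem Dstar p hp
  have h := RTree.depth_mul_weight_le w hopt hL
  rw [hlen] at h
  have hR : (p.2 : ℝ) * (BT.leafWeight w p.1 : ℝ) ≤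
      2 * ((T.maxDegree : ℝ) + 1) * (T.wsum w Finset.univ : ℝ) := by exact_mod_cast h
  have hcp' : (c : ℝ) ≤ p.2 := by exact_mod_cast hcp
  have hW : (0 : ℝ) ≤ (T.wsum w Finset.univ : ℝ) := Nat.cast_nonneg _
  have hΔ : (0 : ℝ) ≤ (T.maxDegree : ℝ) := Nat.cast_nonneg _
  have hac : a * c ≤ a * p.2 := mul_le_mul_of_nonneg_left hcp' ha0
  have hp0 : (0 : ℝ) < p.2 := by
    by_contra hneg
    have : (p.2 : ℝ) = 0 := le_antisymm (not_lt.1 hneg) (Nat.cast_nonneg _)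
    rw [this] at hac
    linarith
  have h2 : 2 * ((T.maxDegree : ℝ) + 1) * (T.wsum w Finset.univ : ℝ) ≤
      a * p.2 * (T.wsum w Finset.univ : ℝ) :=
    mul_le_mul_of_nonneg_right (by linarith) hW
  refine le_of_mul_le_mul_left ?_ hp0
  linarith
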